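/- Let 0 < u < t < n be integers, let P_1 = (x_1,…,x_t), P_2 = (x_{u+1},…,x_n), P_3 = (x_{t+1},…,x_n, x_1,…,x_u) be prime ideals of S = K[x_1,…,x_n], and let I = P_1 ∩ P_2 ∩ P_3. Then sdepth_S(I) ≤ 2 + [ C(n,3) − C(u,3) − C(t−u,3) − C(n−t,3) ] / [ C(n,2) − C(u,2) − C(t−u,2) − C(n−t,2) ], where C(a,b) denotes the binomial coefficient with the convention C(a,b) = 0 when a < b. -/

import Mathlib

open MvPolynomial

/-- The Stanley space `u·K[Z]` inside the polynomial ring `K[x_i : i ∈ σ]`: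
the `K`-span of all monomials `x^(u+v)` with `supp v ⊆ Z`. -/
noncomputable def stanleySpace (K : Type*) [Field K] {σ : Type*} (u : σ →₀ ℕ) (Z : Set σ) :
    Submodule K (MvPolynomial σ K) :=
  Submodule.span K
    ((fun v : σ →₀ ℕ => (monomial (u + v) (1 : K) : MvPolynomial σ K)) ''
      {v | (v.support : Set σ) ⊆ Z})

/-- `(u, Z)` (indexed by a finite type `ι`) is a Stanley decomposition of the monomial
ideal `I`: the Stanley spaces `x^(u i)·K[Z i]` are independent and their (direct) sum is `I`
as a `K`-vector space.  (Inside the polynomial ring each Stanley space is automatically a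
free `K[Z]`-module.) -/
def IsStanleyDecompOfIdeal {K σ : Type*} [Field K] {ι : Type} [Fintype ι]
    (I : Ideal (MvPolynomial σ K)) (u : ι → (σ →₀ ℕ)) (Z : ι → Finset σ) : Prop :=
  iSupIndep (fun i => stanleySpace K (u i) (Z i)) ∧
    (⨆ i, stanleySpace K (u i) (Z i)) = Submodule.restrictScalars K I

/-- The Stanley depth of a monomial ideal `I`: the largest `d` such that there is a Stanley
decomposition of `I` all of whose Stanley spaces `u_i K[Z_i]` satisfy `|Z_i| ≥ d`. -/
noncomputable def sdepthIdeal {K σ : Type*} [Field K] (I : Ideal (MvPolynomial σ K)) : ℕ :=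
  sSup {d | ∃ (ι : Type) (_ : Fintype ι) (_ : Nonempty ι) (u : ι → (σ →₀ ℕ))
    (Z : ι → Finset σ), IsStanleyDecompOfIdeal I u Z ∧ ∀ i, d ≤ (Z i).card}

/-- `(u, Z)` is a Stanley decomposition of `S/I`:  each Stanley space `x^(u i)·K[Z i]` meets
`I` trivially (equivalently, its image in `S/I` is a free `K[Z i]`-module), the images of the
Stanley spaces in `S/I` are independent, and they sum to `S/I`. -/
def IsStanleyDecompOfQuotient {K σ : Type*} [Field K] {ι : Type} [Fintype ι]
    (I : Ideal (MvPolynomial σ K)) (u : ι → (σ →₀ ℕ)) (Z : ι → Finset σ) : Prop :=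
  (∀ i, Disjoint (stanleySpace K (u i) (Z i)) (Submodule.restrictScalars K I)) ∧
    iSupIndep (fun i =>
      (stanleySpace K (u i) (Z i)).map (Ideal.Quotient.mkₐ K I).toLinearMap) ∧
    (⨆ i, (stanleySpace K (u i) (Z i)).map (Ideal.Quotient.mkₐ K I).toLinearMap) = ⊤

/-- The Stanley depth of `S/I` for a monomial ideal `I`. -/
noncomputable def sdepthQuot {K σ : Type*} [Field K] (I : Ideal (MvPolynomial σ K)) : ℕ :=
  sSup {d | ∃ (ι : Type) (_ : Fintype ι) (_ : Nonempty ι) (u : ι → (σ →₀ ℕ))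
    (Z : ι → Finset σ), IsStanleyDecompOfQuotient I u Z ∧ ∀ i, d ≤ (Z i).card}

/-- A monomial ideal: an ideal generated by monomials. -/
def IsMonomialIdeal {K σ : Type*} [Field K] (I : Ideal (MvPolynomial σ K)) : Prop :=
  ∃ A : Set (σ →₀ ℕ), I = Ideal.span ((fun a => (monomial a (1 : K) : MvPolynomial σ K)) '' A)

/-- The (exponents of the) minimal monomial generators of a monomial ideal `I`:
monomials in `I` that are not proper multiples of monomials in `I`. -/
def minimalGenerators {K σ : Type*} [Field K] (I : Ideal (MvPolynomial σ K)) :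
    Set (σ →₀ ℕ) :=
  {a | (monomial a (1 : K) : MvPolynomial σ K) ∈ I ∧
    ∀ b < a, (monomial b (1 : K) : MvPolynomial σ K) ∉ I}

/-- The depth (w.r.t. the maximal graded ideal `m = (x_1,…,x_n)`) of a module `M` over the
polynomial ring: the maximal length of a regular sequence on `M` consisting of elements
of `m`. -/
noncomputable def mdepth (K σ : Type*) [Field K] (M : Type*) [AddCommGroup M]
    [Module (MvPolynomial σ K) M] : ℕ :=
  sSup {k | ∃ rs : List (MvPolynomial σ K), rs.length = k ∧
    (∀ r ∈ rs, r ∈ Ideal.span (Set.range (X : σ → MvPolynomial σ K))) ∧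
    RingTheory.Sequence.IsRegular M rs}

/-- The height of a prime ideal: the height of the corresponding point
of the prime spectrum, i.e. the supremum of lengths of chains of primes below it. -/
noncomputable def primeHt {R : Type*} [CommRing R] (P : Ideal R) (hP : P.IsPrime) : ℕ∞ :=
  Order.height (⟨P, hP⟩ : PrimeSpectrum R)

/-!
Let `k` be a lower bound for the degrees of the monomials of `I`, and consider a Stanley
decomposition of `I` with all `|Z i| ≥ d`. A squarefree monomial `x^F ∈ I` of degree `k` lies in
some Stanley space, and by minimality of its degree it must be the generator of that space, which
therefore contains at least `d - k` squarefree monomials of degree `k + 1`, namely the `x_j x^F`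
with `j ∈ Z i \ F`. Distinct Stanley spaces share no monomial, so `β_k (d - k) ≤ β_{k+1}`, where
`β_m` counts the squarefree monomials of degree `m` in `I`.

The generating sets of `P₁`, `P₂` and `P₃` are the complements of the blocks of a partition of the
variables, of sizes `n - t`, `u` and `t - u`. Hence `x^F ∈ P₁ ∩ P₂ ∩ P₃` exactly when `F` is
contained in no block, so one can take `k = 2`, and
`β_m = C(n,m) - C(u,m) - C(t-u,m) - C(n-t,m)` for `m ≥ 1`.
-/

open Finset

section Counting

lemma disjoint_powersetCard {α : Type*} {A B : Finset α} {k : ℕ} (hk : k ≠ 0)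
    (hAB : Disjoint A B) : Disjoint (A.powersetCard k) (B.powersetCard k) := by
  refine Finset.disjoint_left.2 fun F hA hB => ?_
  rw [mem_powersetCard] at hA hB
  have hF : F = ∅ := (disjoint_self_iff_empty F).1 (hAB.mono hA.1 hB.1)
  exact hk (by rw [← hA.2, hF, card_empty])

lemma card_powersetCard_filter_not_subset_add_sum {α ι : Type*} [DecidableEq α] {s : Finset ι}
    {B : ι → Finset α} (hB : (s : Set ι).PairwiseDisjoint B) {T : Finset α}
    (hBT : ∀ i ∈ s, B i ⊆ T) {k : ℕ} (hk : k ≠ 0) :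
    #{F ∈ T.powersetCard k | ∀ i ∈ s, ¬ F ⊆ B i} + ∑ i ∈ s, (#(B i)).choose k =
      (#T).choose k := by
  have hsum : #{F ∈ T.powersetCard k | ¬ ∀ i ∈ s, ¬ F ⊆ B i} = ∑ i ∈ s, (#(B i)).choose k :=
    calc #{F ∈ T.powersetCard k | ¬ ∀ i ∈ s, ¬ F ⊆ B i}
        = #(s.biUnion fun i => (B i).powersetCard k) := by
          congr 1
          ext F
          simp only [mem_filter, mem_powersetCard, mem_biUnion, not_forall, not_not, exists_prop]
          exact ⟨fun ⟨⟨_, hF⟩, i, hi, hFi⟩ => ⟨i, hi, hFi, hF⟩,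
            fun ⟨i, hi, hFi, hF⟩ => ⟨⟨hFi.trans (hBT i hi), hF⟩, i, hi, hFi⟩⟩
      _ = ∑ i ∈ s, (#(B i)).choose k := by
          rw [card_biUnion fun i hi j hj hij => disjoint_powersetCard hk (hB hi hj hij)]
          simp only [card_powersetCard]
  rw [← hsum, card_filter_add_card_filter_not, card_powersetCard]

end Counting

section SquarefreeExponent

variable {σ : Type*}

/-- The exponent vector of the squarefree monomial `∏ i ∈ F, x_i`. -/
noncomputable def squarefreeExponent (F : Finset σ) : σ →₀ ℕ :=
  ∑ i ∈ F, Finsupp.single i 1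

@[simp]
lemma support_squarefreeExponent (F : Finset σ) : (squarefreeExponent F).support = F := by
  classical
  ext i
  simp [squarefreeExponent, Finsupp.finsetSum_apply, Finsupp.single_apply]

lemma squarefreeExponent_injective :
    Function.Injective (squarefreeExponent : Finset σ → σ →₀ ℕ) :=
  Function.LeftInverse.injective support_squarefreeExponent

@[simp]
lemma degree_squarefreeExponent (F : Finset σ) : (squarefreeExponent F).degree = #F := by
  simp [squarefreeExponent, map_sum, Finsupp.degree_single]

lemma squarefreeExponent_union [DecidableEq σ] {F G : Finset σ} (h : Disjoint F G) :
    squarefreeExponent (F ∪ G) = squarefreeExponent F + squarefreeExponent G :=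
  sum_union h

lemma card_support_le_degree (a : σ →₀ ℕ) : #a.support ≤ a.degree := by
  rw [Finsupp.degree_apply, card_eq_sum_ones]
  exact sum_le_sum fun i hi => Nat.one_le_iff_ne_zero.2 (Finsupp.mem_support_iff.1 hi)

end SquarefreeExponent

section StanleySpace

lemma iSup_restrictSupport {R σ : Type*} [CommSemiring R] {ι : Sort*} (s : ι → Set (σ →₀ ℕ)) :
    ⨆ i, restrictSupport R (s i) = restrictSupport R (⋃ i, s i) := by
  simp only [restrictSupport_eq_span, Set.image_iUnion, Submodule.span_iUnion]

variable {K σ : Type*} [Field K]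

lemma stanleySpace_eq_restrictSupport (u : σ →₀ ℕ) (Z : Set σ) :
    stanleySpace K u Z = restrictSupport K ((u + ·) '' {v | (v.support : Set σ) ⊆ Z}) := by
  rw [stanleySpace, restrictSupport_eq_span, Set.image_image]

lemma monomial_mem_stanleySpace_iff {u a : σ →₀ ℕ} {Z : Set σ} :
    monomial a (1 : K) ∈ stanleySpace K u Z ↔
      ∃ v : σ →₀ ℕ, (v.support : Set σ) ⊆ Z ∧ u + v = a := by
  simp [stanleySpace_eq_restrictSupport]

lemma monomial_mem_iSup_stanleySpace_iff {ι : Sort*} {u : ι → σ →₀ ℕ} {Z : ι → Set σ}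
    {a : σ →₀ ℕ} :
    monomial a (1 : K) ∈ ⨆ i, stanleySpace K (u i) (Z i) ↔
      ∃ i, monomial a (1 : K) ∈ stanleySpace K (u i) (Z i) := by
  simp [stanleySpace_eq_restrictSupport, iSup_restrictSupport]

lemma monomial_squarefreeExponent_union_mem_stanleySpace [DecidableEq σ] {F G : Finset σ}
    {Z : Set σ} (hFG : Disjoint F G) (hG : (G : Set σ) ⊆ Z) :
    monomial (squarefreeExponent (F ∪ G)) (1 : K) ∈ stanleySpace K (squarefreeExponent F) Z :=
  monomial_mem_stanleySpace_iff.2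
    ⟨squarefreeExponent G, by simpa using hG, (squarefreeExponent_union hFG).symm⟩

end StanleySpace

section SquarefreeSupports

variable {K σ : Type*} [Field K] [Fintype σ]

open Classical in
/-- The supports of the squarefree monomials of degree `k` lying in the ideal `I`. -/
noncomputable def squarefreeSupports (I : Ideal (MvPolynomial σ K)) (k : ℕ) :
    Finset (Finset σ) :=
  {F ∈ univ.powersetCard k | monomial (squarefreeExponent F) (1 : K) ∈ I}

lemma mem_squarefreeSupports {I : Ideal (MvPolynomial σ K)} {k : ℕ} {F : Finset σ} :
    F ∈ squarefreeSupports I k ↔ #F = k ∧ monomial (squarefreeExponent F) (1 : K) ∈ I := by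
  simp [squarefreeSupports]

end SquarefreeSupports

namespace IsStanleyDecompOfIdeal

variable {K σ : Type*} [Field K] {ι : Type} [Fintype ι] {I : Ideal (MvPolynomial σ K)}
  {u : ι → σ →₀ ℕ} {Z : ι → Finset σ}

lemma monomial_mem_iff (h : IsStanleyDecompOfIdeal I u Z) {a : σ →₀ ℕ} :
    monomial a (1 : K) ∈ I ↔ ∃ i, monomial a (1 : K) ∈ stanleySpace K (u i) (Z i) := by
  rw [← monomial_mem_iSup_stanleySpace_iff, h.2, Submodule.restrictScalars_mem]

lemma eq_of_monomial_mem_stanleySpace (h : IsStanleyDecompOfIdeal I u Z) {a : σ →₀ ℕ} {i j : ι}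
    (hi : monomial a (1 : K) ∈ stanleySpace K (u i) (Z i))
    (hj : monomial a (1 : K) ∈ stanleySpace K (u j) (Z j)) : i = j := by
  by_contra hij
  have := Submodule.disjoint_def.1 (h.1.pairwiseDisjoint hij) _ hi hj
  exact one_ne_zero (monomial_eq_zero.1 this)

lemma monomial_generator_mem (h : IsStanleyDecompOfIdeal I u Z) (i : ι) :
    monomial (u i) (1 : K) ∈ I :=
  h.monomial_mem_iff.2 ⟨i, monomial_mem_stanleySpace_iff.2 ⟨0, by simp, add_zero _⟩⟩

lemma exists_eq_of_minimal_degree (h : IsStanleyDecompOfIdeal I u Z) {a : σ →₀ ℕ}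
    (ha : monomial a (1 : K) ∈ I) (hmin : ∀ b, monomial b (1 : K) ∈ I → a.degree ≤ b.degree) :
    ∃ i, u i = a := by
  obtain ⟨i, hi⟩ := h.monomial_mem_iff.1 ha
  obtain ⟨v, -, rfl⟩ := monomial_mem_stanleySpace_iff.1 hi
  have hv : v.degree = 0 := by
    have := hmin _ (h.monomial_generator_mem i)
    rw [map_add] at this
    omega
  exact ⟨i, by rw [(Finsupp.degree_eq_zero_iff v).1 hv, add_zero]⟩

variable [Fintype σ]

open Classical in
lemma choose_le_card_filter_squarefreeSupports (h : IsStanleyDecompOfIdeal I u Z) {i : ι}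
    {F : Finset σ} (hF : u i = squarefreeExponent F) (j : ℕ) :
    (#(Z i) - #F).choose j ≤ #{G ∈ squarefreeSupports I (#F + j) |
      monomial (squarefreeExponent G) (1 : K) ∈ stanleySpace K (u i) (Z i)} := by
  calc (#(Z i) - #F).choose j
      ≤ (#(Z i \ F)).choose j := Nat.choose_le_choose j (le_card_sdiff F (Z i))
    _ = #((Z i \ F).powersetCard j) := (card_powersetCard j _).symm
    _ ≤ _ := card_le_card_of_injOn (F ∪ ·) ?_ ?_
  · intro E hE
    obtain ⟨hEZ, hEcard⟩ := mem_powersetCard.1 hE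
    have hFE : Disjoint F E := disjoint_sdiff.mono_right hEZ
    have hmem : monomial (squarefreeExponent (F ∪ E)) (1 : K) ∈ stanleySpace K (u i) (Z i) :=
      hF ▸ monomial_squarefreeExponent_union_mem_stanleySpace hFE
        (mod_cast hEZ.trans sdiff_subset)
    exact mem_filter.2 ⟨mem_squarefreeSupports.2 ⟨by rw [card_union_of_disjoint hFE, hEcard],
      h.monomial_mem_iff.2 ⟨i, hmem⟩⟩, hmem⟩
  · intro E hE E' hE' heq
    have disj : ∀ {D}, D ∈ (Z i \ F).powersetCard j → Disjoint F D := fun hD =>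
      disjoint_sdiff.mono_right (mem_powersetCard.1 hD).1
    rw [← union_sdiff_cancel_left (disj hE), ← union_sdiff_cancel_left (disj hE')]
    exact congrArg (· \ F) heq

theorem card_squarefreeSupports_mul_choose_le (h : IsStanleyDecompOfIdeal I u Z) {k d : ℕ}
    (hk : ∀ a, monomial a (1 : K) ∈ I → k ≤ a.degree) (hd : ∀ i, d ≤ #(Z i)) (j : ℕ) :
    #(squarefreeSupports I k) * (d - k).choose j ≤ #(squarefreeSupports I (k + j)) := by
  classical
  let r : Finset σ → Finset σ → Prop := fun F G => ∃ i, u i = squarefreeExponent F ∧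
    monomial (squarefreeExponent G) (1 : K) ∈ stanleySpace K (u i) (Z i)
  rw [← mul_one #(squarefreeSupports I (k + j))]
  refine card_mul_le_card_mul r (fun F hF => ?_) fun G _ => card_le_one.2 fun F hF F' hF' => ?_
  · obtain ⟨rfl, hFI⟩ := mem_squarefreeSupports.1 hF
    obtain ⟨i, hi⟩ := h.exists_eq_of_minimal_degree hFI (by simpa using hk)
    calc (d - #F).choose j
        ≤ (#(Z i) - #F).choose j := Nat.choose_le_choose j (Nat.sub_le_sub_right (hd i) _)
      _ ≤ _ := h.choose_le_card_filter_squarefreeSupports hi j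
      _ ≤ _ := card_le_card fun G hG =>
          mem_filter.2 ⟨(mem_filter.1 hG).1, i, hi, (mem_filter.1 hG).2⟩
  · obtain ⟨-, i, hi, hGi⟩ := mem_filter.1 hF
    obtain ⟨-, i', hi', hGi'⟩ := mem_filter.1 hF'
    obtain rfl := h.eq_of_monomial_mem_stanleySpace hGi hGi'
    exact squarefreeExponent_injective (hi.symm.trans hi')

end IsStanleyDecompOfIdeal

theorem sdepthIdeal_le_add_div {K σ : Type*} [Field K] [Fintype σ]
    {I : Ideal (MvPolynomial σ K)} {k : ℕ}
    (hk : ∀ a, monomial a (1 : K) ∈ I → k ≤ a.degree)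
    (hne : (squarefreeSupports I k).Nonempty) :
    sdepthIdeal I ≤ k + #(squarefreeSupports I (k + 1)) / #(squarefreeSupports I k) := by
  refine csSup_le' ?_
  rintro d ⟨ι, _, -, u, Z, h, hd⟩
  have hcount := h.card_squarefreeSupports_mul_choose_le hk hd 1
  rw [Nat.choose_one_right, mul_comm] at hcount
  have := (Nat.le_div_iff_mul_le hne.card_pos).2 hcount
  omega

section BlockIdeal

variable {K σ ι : Type*} [Field K] {c : σ → ι}

variable (K) in
/-- The intersection of the monomial primes `P_i = (x_j : c j ≠ i)` attached to a partition of the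
variables, encoded as a colouring `c` whose colour classes are the blocks. -/
noncomputable def blockIdeal (c : σ → ι) : Ideal (MvPolynomial σ K) :=
  ⨅ i, Ideal.span (X '' {j | c j ≠ i})

lemma monomial_mem_blockIdeal_iff {a : σ →₀ ℕ} :
    monomial a (1 : K) ∈ blockIdeal K c ↔ ∀ i, ∃ j ∈ a.support, c j ≠ i := by
  classical
  simp [blockIdeal, Submodule.mem_iInf, mem_ideal_span_X_image, support_monomial, and_comm,
    -mem_support_iff]

lemma two_le_degree_of_monomial_mem_blockIdeal [Nonempty ι] {a : σ →₀ ℕ}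
    (ha : monomial a (1 : K) ∈ blockIdeal K c) : 2 ≤ a.degree := by
  rw [monomial_mem_blockIdeal_iff] at ha
  obtain ⟨x, hx, -⟩ := ha (Classical.arbitrary ι)
  obtain ⟨y, hy, hyx⟩ := ha (c x)
  exact (one_lt_card.2 ⟨x, hx, y, hy, fun h => hyx (congrArg c h.symm)⟩).trans_le
    (card_support_le_degree a)

variable [Fintype σ]

lemma squarefreeSupports_blockIdeal_two_nonempty {x y : σ} (hxy : c x ≠ c y) :
    (squarefreeSupports (blockIdeal K c) 2).Nonempty := by
  classical
  refine ⟨{x, y}, mem_squarefreeSupports.2 ⟨card_pair (ne_of_apply_ne c hxy), ?_⟩⟩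
  rw [monomial_mem_blockIdeal_iff, support_squarefreeExponent]
  intro i
  by_cases hx : c x = i
  · exact ⟨y, by simp, fun hy => hxy (hx.trans hy.symm)⟩
  · exact ⟨x, by simp, hx⟩

lemma card_squarefreeSupports_blockIdeal [Fintype ι] [DecidableEq ι] {k : ℕ} (hk : k ≠ 0) :
    (#(squarefreeSupports (blockIdeal K c) k) : ℚ) =
      (Fintype.card σ).choose k - ∑ i, ((#{j | c j = i}).choose k : ℚ) := by
  classical
  have hcount := card_powersetCard_filter_not_subset_add_sum
    (Set.pairwiseDisjoint_filter c (univ : Finset ι) univ) (fun i _ => subset_univ _) hk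
  rw [eq_sub_iff_add_eq]
  norm_cast
  rw [← card_univ, ← hcount]
  congr 2
  ext F
  simp [mem_squarefreeSupports, monomial_mem_blockIdeal_iff, subset_iff]

theorem sdepth_le_binomial_bound_general [Fintype ι] [DecidableEq ι] {x y : σ} (hxy : c x ≠ c y) :
    (sdepthIdeal (blockIdeal K c) : ℚ) ≤ 2 +
      ((Fintype.card σ).choose 3 - ∑ i, ((#{j | c j = i}).choose 3 : ℚ)) /
      ((Fintype.card σ).choose 2 - ∑ i, ((#{j | c j = i}).choose 2 : ℚ)) := by
  have : Nonempty ι := ⟨c x⟩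
  have hle : sdepthIdeal (blockIdeal K c) ≤ 2 +
      #(squarefreeSupports (blockIdeal K c) 3) / #(squarefreeSupports (blockIdeal K c) 2) :=
    sdepthIdeal_le_add_div (fun _ => two_le_degree_of_monomial_mem_blockIdeal)
      (squarefreeSupports_blockIdeal_two_nonempty hxy)
  rw [← card_squarefreeSupports_blockIdeal (K := K) two_ne_zero,
    ← card_squarefreeSupports_blockIdeal (K := K) three_ne_zero]
  calc (sdepthIdeal (blockIdeal K c) : ℚ)
      ≤ (2 + #(squarefreeSupports (blockIdeal K c) 3) /
          #(squarefreeSupports (blockIdeal K c) 2) : ℕ) := mod_cast hle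
    _ ≤ _ := by
      rw [Nat.cast_add, Nat.cast_ofNat]
      gcongr
      exact Nat.cast_div_le

end BlockIdeal

section IntervalBlock

/-- The colouring of `ℕ` by the intervals `[0, u)`, `[u, t)` and `[t, ∞)`, for `u ≤ t`. The primes
of `blockIdeal` attached to the colours `0`, `1`, `2` are the paper's `P_2`, `P_3`, `P_1`. -/
def intervalBlock (u t i : ℕ) : Fin 3 :=
  if i < u then 0 else if i < t then 1 else 2

variable {n u t i : ℕ}

lemma intervalBlock_eq_zero_iff : intervalBlock u t i = 0 ↔ i < u := by
  grind [intervalBlock]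

lemma intervalBlock_eq_one_iff : intervalBlock u t i = 1 ↔ u ≤ i ∧ i < t := by
  grind [intervalBlock]

lemma intervalBlock_eq_two_iff (hut : u ≤ t) : intervalBlock u t i = 2 ↔ t ≤ i := by
  grind [intervalBlock]

lemma blockIdeal_intervalBlock (K : Type*) [Field K] (hut : u ≤ t) :
    blockIdeal K (fun i : Fin n => intervalBlock u t i) =
      Ideal.span (X '' {i : Fin n | u ≤ (i : ℕ)}) ⊓
        Ideal.span (X '' {i : Fin n | (i : ℕ) < u ∨ t ≤ (i : ℕ)}) ⊓
        Ideal.span (X '' {i : Fin n | (i : ℕ) < t}) := by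
  have iInf_fin_three (P : Fin 3 → Ideal (MvPolynomial (Fin n) K)) :
      ⨅ m, P m = P 0 ⊓ P 1 ⊓ P 2 :=
    eq_of_forall_le_iff fun J => by simp [Fin.forall_fin_succ, and_assoc]
  rw [blockIdeal, iInf_fin_three]
  simp only [ne_eq, intervalBlock_eq_zero_iff, intervalBlock_eq_one_iff,
    intervalBlock_eq_two_iff hut, not_and_or, not_le, not_lt]

lemma card_filter_le_val_lt {a b : ℕ} (hb : b ≤ n) :
    #{i : Fin n | a ≤ (i : ℕ) ∧ (i : ℕ) < b} = b - a := by
  rw [← Nat.card_Ico, ← card_attachFin (Ico a b) fun i hi => (mem_Ico.1 hi).2.trans_le hb]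
  congr 1
  ext i
  simp

lemma card_filter_intervalBlock_eq (hut : u ≤ t) (htn : t ≤ n) (m : Fin 3) :
    #{i : Fin n | intervalBlock u t i = m} = ![u, t - u, n - t] m := by
  fin_cases m
  · simpa [intervalBlock_eq_zero_iff] using card_filter_le_val_lt (a := 0) (hut.trans htn)
  · simpa [intervalBlock_eq_one_iff] using card_filter_le_val_lt (a := u) htn
  · simpa [intervalBlock_eq_two_iff hut] using card_filter_le_val_lt (a := t) le_rfl

end IntervalBlock

/-- **Lemma 3.4.** For `0 < u < t < n`, `P_1 = (x_1,…,x_t)`, `P_2 = (x_{u+1},…,x_n)`,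
`P_3 = (x_{t+1},…,x_n,x_1,…,x_u)` and `I = P_1 ∩ P_2 ∩ P_3`, one has
`sdepth I ≤ 2 + (C(n,3)-C(u,3)-C(t-u,3)-C(n-t,3)) / (C(n,2)-C(u,2)-C(t-u,2)-C(n-t,2))`. -/
theorem sdepth_le_binomial_bound {K : Type*} [Field K] {n u t : ℕ}
    (hu : 0 < u) (hut : u < t) (htn : t < n)
    (P₁ P₂ P₃ I : Ideal (MvPolynomial (Fin n) K))
    (hP₁ : P₁ = Ideal.span
      ((fun j => (X j : MvPolynomial (Fin n) K)) '' {i : Fin n | (i : ℕ) < t}))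
    (hP₂ : P₂ = Ideal.span
      ((fun j => (X j : MvPolynomial (Fin n) K)) '' {i : Fin n | u ≤ (i : ℕ)}))
    (hP₃ : P₃ = Ideal.span
      ((fun j => (X j : MvPolynomial (Fin n) K)) ''
        {i : Fin n | (i : ℕ) < u ∨ t ≤ (i : ℕ)}))
    (hI : I = P₁ ⊓ P₂ ⊓ P₃) :
    (sdepthIdeal I : ℚ) ≤ 2 +
      ((n.choose 3 : ℚ) - (u.choose 3 : ℚ) - ((t - u).choose 3 : ℚ) - ((n - t).choose 3 : ℚ)) /
      ((n.choose 2 : ℚ) - (u.choose 2 : ℚ) - ((t - u).choose 2 : ℚ) - ((n - t).choose 2 : ℚ)) := by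
  have hI_eq : I = blockIdeal K fun i : Fin n => intervalBlock u t i := by
    rw [hI, hP₁, hP₂, hP₃, inf_assoc, inf_comm, blockIdeal_intervalBlock K hut.le]
  have hblocks : intervalBlock u t (⟨0, by omega⟩ : Fin n) ≠
      intervalBlock u t (⟨u, hut.trans htn⟩ : Fin n) := by
    grind [intervalBlock]
  simpa [hI_eq, card_filter_intervalBlock_eq hut.le htn.le, Fin.sum_univ_three, sub_sub] using
    sdepth_le_binomial_bound_general (K := K) (c := fun i : Fin n => intervalBlock u t i) hblocks
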